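/- Let f : 2^[n] → ℝ be a non-negative submodular function, and consider the uniform distribution over subsets of [n]. Then for all ρ ∈ [0,1], the noise stability satisfies Stab_ρ(f) ≥ ρ · ‖f‖₂², where Stab_ρ(f) = 2^{-n} Σ_{X⊆[n]} f(X)·T_ρf(X) and ‖f‖₂² = 2^{-n} Σ_{X⊆[n]} f(X)². -/

import Mathlib

/-!
The noise operator at `X` evaluates the multilinear extension of `f` at the point which is
`p = (1 + ρ) / 2` on `X` and `1 - p` off `X`. By submodularity, adjoining to a random subset of `A`
a random subset of density `q` of a set `B` disjoint from `A` gives on average at least `1 - q`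
times the value without `B` plus `q` times the value with all of `B`. Applied with `A = ∅`, `B = X`
and then with `A = X`, `B = Xᶜ`, this yields `p ^ 2 * f X ≤ T_ρ f X` for nonnegative `f`, and
`p ^ 2 - ρ = ((1 - ρ) / 2) ^ 2 ≥ 0`.
-/

open Finset

/-- Submodular functions on a lattice; on `Finset α`, `⊔` and `⊓` are union and intersection. -/
def Submodular {L M : Type*} [Lattice L] [Add M] [LE M] (f : L → M) : Prop :=
  ∀ a b, f (a ⊔ b) + f (a ⊓ b) ≤ f a + f b

theorem Submodular.comp_sup_left {L M : Type*} [DistribLattice L] [Add M] [LE M] {f : L → M}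
    (hf : Submodular f) (c : L) : Submodular fun a => f (c ⊔ a) := fun a b => by
  beta_reduce
  rw [sup_sup_distrib_left, sup_inf_left]
  exact hf (c ⊔ a) (c ⊔ b)

section MultilinearExtension

variable {α K : Type*} [DecidableEq α] [CommRing K]

/-- The multilinear extension of the restriction of a set function `f` to subsets of `A`: the mean
of `f` at a random subset of `A` containing each `i ∈ A` independently with probability `p i`. -/
def multilinearExtension (A : Finset α) (f : Finset α → K) (p : α → K) : K :=
  ∑ S ∈ A.powerset, (∏ i ∈ S, p i) * (∏ i ∈ A \ S, (1 - p i)) * f S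

theorem multilinearExtension_empty (f : Finset α → K) (p : α → K) :
    multilinearExtension ∅ f p = f ∅ := by
  simp [multilinearExtension]

theorem multilinearExtension_insert {a : α} {A : Finset α} (ha : a ∉ A) (f : Finset α → K)
    (p : α → K) :
    multilinearExtension (insert a A) f p =
      (1 - p a) * multilinearExtension A f p +
        p a * multilinearExtension A (fun S => f (insert a S)) p := by
  simp only [multilinearExtension, sum_powerset_insert ha, mul_sum]
  congr 1 <;> refine sum_congr rfl fun S hS => ?_ <;>
    have haS : a ∉ S := fun h => ha (mem_powerset.1 hS h)
  · rw [insert_sdiff_of_notMem _ haS, prod_insert (by simp [ha])]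
    ring
  · rw [insert_sdiff_insert, sdiff_insert_of_notMem ha, prod_insert haS]
    ring

theorem multilinearExtension_add (A : Finset α) (f g : Finset α → K) (p : α → K) :
    multilinearExtension A (fun S => f S + g S) p =
      multilinearExtension A f p + multilinearExtension A g p := by
  simp only [multilinearExtension, mul_add, sum_add_distrib]

variable [PartialOrder K] [IsOrderedRing K]

theorem multilinearExtension_mono {A : Finset α} {f g : Finset α → K} {p : α → K}
    (hp : ∀ i ∈ A, p i ∈ Set.Icc 0 1) (hfg : ∀ S ⊆ A, f S ≤ g S) :
    multilinearExtension A f p ≤ multilinearExtension A g p := by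
  refine sum_le_sum fun S hS => ?_
  have hSA := mem_powerset.1 hS
  refine mul_le_mul_of_nonneg_left (hfg S hSA) (mul_nonneg ?_ ?_)
  · exact prod_nonneg fun i hi => (hp i (hSA hi)).1
  · exact prod_nonneg fun i hi => sub_nonneg.2 (hp i (sdiff_subset hi)).2

theorem multilinearExtension_nonneg {A : Finset α} {f : Finset α → K} {p : α → K}
    (hp : ∀ i ∈ A, p i ∈ Set.Icc 0 1) (hf : ∀ S ⊆ A, 0 ≤ f S) :
    0 ≤ multilinearExtension A f p := by
  simpa [multilinearExtension] using multilinearExtension_mono (f := 0) hp hf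

theorem Submodular.multilinearExtension_add_union_insert_le {A B : Finset α} {b : α}
    {f : Finset α → K} {p : α → K} (hf : Submodular f) (hp : ∀ i ∈ A, p i ∈ Set.Icc 0 1)
    (hbA : b ∉ A) (hbB : b ∉ B) :
    multilinearExtension A f p + multilinearExtension A (fun S => f (S ∪ insert b B)) p ≤
      multilinearExtension A (fun S => f (S ∪ B)) p +
        multilinearExtension A (fun S => f (insert b S)) p := by
  simp only [← multilinearExtension_add]
  refine multilinearExtension_mono hp fun S hS => ?_
  have hbS : b ∉ S := fun h => hbA (hS h)
  have hsup : (S ∪ B) ⊔ insert b S = S ∪ insert b B := by grind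
  have hinf : (S ∪ B) ⊓ insert b S = S := by grind
  simpa only [hsup, hinf, add_comm (f S)] using hf (S ∪ B) (insert b S)

theorem Submodular.le_multilinearExtension_union {A B : Finset α} {f : Finset α → K} {p : α → K}
    {q : K} (hf : Submodular f) (hAB : Disjoint A B) (hp : ∀ i ∈ A, p i ∈ Set.Icc 0 1)
    (hq : q ∈ Set.Icc 0 1) (hpq : ∀ i ∈ B, p i = q) :
    (1 - q) * multilinearExtension A f p + q * multilinearExtension A (fun S => f (S ∪ B)) p ≤
      multilinearExtension (A ∪ B) f p := by
  induction B using Finset.induction_on generalizing f with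
  | empty =>
    simp only [union_empty]
    linear_combination
  | insert b B hbB ih =>
    obtain ⟨hbA, hAB⟩ := disjoint_insert_right.1 hAB
    have hpB : ∀ i ∈ B, p i = q := fun i hi => hpq i (mem_insert_of_mem hi)
    have without_b := ih hf hAB hpB
    have with_b := ih (f := fun S => f (insert b S)) (hf.comp_sup_left {b}) hAB hpB
    have exchange := hf.multilinearExtension_add_union_insert_le hp hbA hbB
    have hbAB : b ∉ A ∪ B := by simp [hbA, hbB]
    rw [union_insert, multilinearExtension_insert hbAB, hpq b (mem_insert_self b B)]
    simp only [← union_insert] at with_b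
    have hq₀ : 0 ≤ q := hq.1
    have hq₁ : 0 ≤ 1 - q := sub_nonneg.2 hq.2
    linear_combination (1 - q) * without_b + q * with_b + q * (1 - q) * exchange

end MultilinearExtension

section NoiseOperator

variable {α K : Type*} [Fintype α] [DecidableEq α] [Field K]

/-- The noise operator `T_ρ` for the uniform distribution on subsets of `α`: the mean of `f` at the
random set obtained from `X` by flipping each membership independently with probability
`(1 - ρ) / 2`. -/
def noiseOperator (ρ : K) (f : Finset α → K) (X : Finset α) : K :=
  ∑ Y, ((1 + ρ) / 2) ^ (Fintype.card α - #(symmDiff X Y)) * ((1 - ρ) / 2) ^ #(symmDiff X Y) * f Y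

/-- The noise stability `Stab_ρ f`: the correlation of `f` with `T_ρ f` under the uniform
distribution on subsets of `α`. -/
def noiseStability (ρ : K) (f : Finset α → K) : K :=
  (2 ^ Fintype.card α)⁻¹ * ∑ X, f X * noiseOperator ρ f X

theorem noiseOperator_eq_multilinearExtension [NeZero (2 : K)] (ρ : K) (f : Finset α → K)
    (X : Finset α) :
    noiseOperator ρ f X =
      multilinearExtension univ f fun i => if i ∈ X then (1 + ρ) / 2 else (1 - ρ) / 2 := by
  simp only [noiseOperator, multilinearExtension, powerset_univ, ← compl_eq_univ_sdiff]
  refine sum_congr rfl fun Y _ => congrArg (· * f Y) ?_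
  have one_sub_keep : 1 - (1 + ρ) / 2 = (1 - ρ) / 2 := by field_simp; ring
  have one_sub_flip : 1 - (1 - ρ) / 2 = (1 + ρ) / 2 := by field_simp; ring
  let weight (i : α) : K := if i ∈ symmDiff X Y then (1 - ρ) / 2 else (1 + ρ) / 2
  calc
    _ = (∏ i ∈ symmDiff X Y, weight i) * ∏ i ∈ (symmDiff X Y)ᶜ, weight i := by
      rw [prod_eq_pow_card fun i hi => if_pos hi,
        prod_eq_pow_card fun i hi => if_neg (mem_compl.1 hi), card_compl, mul_comm]
    _ = (∏ i ∈ Y, weight i) * ∏ i ∈ Yᶜ, weight i := by simp only [prod_mul_prod_compl]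
    _ = _ := by
      congr 1 <;> refine prod_congr rfl fun i hi => ?_ <;> by_cases hX : i ∈ X <;>
        simp_all [weight, mem_symmDiff]

variable [LinearOrder K] [IsStrictOrderedRing K]

theorem Submodular.sq_mul_le_noiseOperator {f : Finset α → K} (hf : Submodular f)
    (hf0 : ∀ S, 0 ≤ f S) {ρ : K} (hρ : ρ ∈ Set.Icc (-1) 1) (X : Finset α) :
    ((1 + ρ) / 2) ^ 2 * f X ≤ noiseOperator ρ f X := by
  obtain ⟨hρ₁, hρ₂⟩ := hρ
  have keep_mem : (1 + ρ) / 2 ∈ Set.Icc 0 1 := ⟨by linarith, by linarith⟩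
  have flip_mem : (1 - ρ) / 2 ∈ Set.Icc 0 1 := ⟨by linarith, by linarith⟩
  let p (i : α) : K := if i ∈ X then (1 + ρ) / 2 else (1 - ρ) / 2
  have hp : ∀ i ∈ X, p i = (1 + ρ) / 2 := fun i hi => if_pos hi
  have hp_compl : ∀ i ∈ Xᶜ, p i = (1 - ρ) / 2 := fun i hi => if_neg (mem_compl.1 hi)
  have hp_mem : ∀ i ∈ X, p i ∈ Set.Icc 0 1 := fun i hi => hp i hi ▸ keep_mem
  have inside : (1 + ρ) / 2 * f X ≤ multilinearExtension X f p := by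
    have h := hf.le_multilinearExtension_union (disjoint_empty_left X) (by simp) keep_mem hp
    simp only [multilinearExtension_empty, empty_union] at h
    linarith [mul_nonneg (sub_nonneg.2 keep_mem.2) (hf0 ∅)]
  have outside : (1 + ρ) / 2 * multilinearExtension X f p ≤ noiseOperator ρ f X := by
    have h := hf.le_multilinearExtension_union disjoint_compl_right hp_mem flip_mem hp_compl
    rw [union_compl, ← noiseOperator_eq_multilinearExtension] at h
    have h0 : 0 ≤ multilinearExtension X (fun S => f (S ∪ Xᶜ)) p :=
      multilinearExtension_nonneg hp_mem fun S _ => hf0 _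
    linear_combination h + mul_nonneg flip_mem.1 h0
  calc
    ((1 + ρ) / 2) ^ 2 * f X = (1 + ρ) / 2 * ((1 + ρ) / 2 * f X) := by ring
    _ ≤ (1 + ρ) / 2 * multilinearExtension X f p := mul_le_mul_of_nonneg_left inside keep_mem.1
    _ ≤ noiseOperator ρ f X := outside

theorem submodular_noise_stability_uniform_general {f : Finset α → K} (hf : Submodular f)
    (hf0 : ∀ S, 0 ≤ f S) {ρ : K} (hρ : ρ ∈ Set.Icc (-1) 1) :
    ((1 + ρ) / 2) ^ 2 * ((2 ^ Fintype.card α)⁻¹ * ∑ X, f X ^ 2) ≤ noiseStability ρ f := by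
  rw [noiseStability, mul_left_comm, mul_sum]
  refine mul_le_mul_of_nonneg_left (sum_le_sum fun X _ => ?_) (by positivity)
  calc
    ((1 + ρ) / 2) ^ 2 * f X ^ 2 = f X * (((1 + ρ) / 2) ^ 2 * f X) := by ring
    _ ≤ f X * noiseOperator ρ f X :=
      mul_le_mul_of_nonneg_left (hf.sq_mul_le_noiseOperator hf0 hρ X) (hf0 X)

end NoiseOperator

/-- **Submodular functions are noise-stable (uniform distribution).**
For a non-negative submodular `f : 2^[n] → ℝ` and `ρ ∈ [0,1]`,
`Stab_ρ(f) ≥ ρ · ‖f‖₂²`, where `Stab_ρ(f) = 2^{-n} Σ_X f(X) · T_ρ f(X)`,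
`T_ρ f(X) = Σ_Y ((1+ρ)/2)^{n−|X Δ Y|} ((1−ρ)/2)^{|X Δ Y|} f(Y)`, and
`‖f‖₂² = 2^{-n} Σ_X f(X)²`. -/
theorem submodular_noise_stability_uniform
    (n : ℕ) (f : Finset (Fin n) → ℝ) (hf0 : ∀ S, 0 ≤ f S)
    (hsub : ∀ S T : Finset (Fin n), f (S ∪ T) + f (S ∩ T) ≤ f S + f T)
    (ρ : ℝ) (hρ : ρ ∈ Set.Icc (0 : ℝ) 1) :
    ρ * (((2 : ℝ) ^ n)⁻¹ * ∑ X : Finset (Fin n), (f X) ^ 2)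
      ≤ ((2 : ℝ) ^ n)⁻¹ *
          ∑ X : Finset (Fin n),
            f X *
              ∑ Y : Finset (Fin n),
                ((1 + ρ) / 2) ^ (n - (symmDiff X Y).card) *
                  ((1 - ρ) / 2) ^ ((symmDiff X Y).card) * f Y := by
  have h := submodular_noise_stability_uniform_general hsub hf0 ⟨by linarith [hρ.1], hρ.2⟩
  simp only [noiseStability, noiseOperator, Fintype.card_fin] at h
  exact (mul_le_mul_of_nonneg_right (by linarith [sq_nonneg (1 - ρ)]) (by positivity)).trans h
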